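/- arXiv:1902.08387 — 3 statements merged into one kernel-verified Lean document; each statement's English description precedes it below -/
import Mathlib

section
/- For every m ∈ ℕ, writing m = 2^k + q with integers k ≥ 0 and 0 ≤ q < 2^k, the complexity of the period-doubling sequence satisfies: p(m) = 2 if k = 0; p(m) = 3·2^{k−1} + 2q if k ≥ 1 and q ≤ 2^{k−1}; and p(m) = 4·2^{k−1} + q if k ≥ 1 and q > 2^{k−1}. -/
/-!
Since `pd` vanishes at odd indices and `pd (2 * j) = 1 - pd j`, an `m`-word starting at the even
index `2 * j` is encoded by the word of length `⌈m / 2⌉` at `j`, and an `m`-word starting at the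
odd index `2 * j - 1` by the word of length `⌊m / 2⌋` at `j`; both encodings are bijective onto
the allowed words of the shorter length. A word occurring at both parities is identically zero,
which for `m ≥ 3` would force the factor `11` at the shorter length; this factor never occurs.
Hence `p(m) = p(⌈m / 2⌉) + p(⌊m / 2⌋)` for `m ≥ 3` (`pdComplexity_rec`), and the formula follows
by induction on `k` from `p(1) = 2` and `p(2) = 3`. The induction is run with `q = 2 ^ k` included
(`pdComplexity_aux`), where the formula agrees with its value at `(k + 1, 0)`; this is what makes
`⌈m / 2⌉` always fall into the range of the induction hypothesis.
-/

open Filter Topology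

/-- The period-doubling sequence (1-based): `pd i = k_i mod 2` where `k_i` is the
largest `k` such that `2^k` divides `i`. -/
def pd (i : ℕ) : ℕ := padicValNat 2 i % 2

/-- The `m`-word `w_i^(m) = ω_i ω_{i+1} ⋯ ω_{i+m-1}` of the period-doubling sequence. -/
def wordAt (i m : ℕ) : List ℕ := (List.range m).map (fun h => pd (i + h))

/-- An `m`-word is allowed if it occurs in the period-doubling sequence. -/
def Allowed (m : ℕ) (v : List ℕ) : Prop := ∃ i, 1 ≤ i ∧ wordAt i m = v

/-- The complexity function of the period-doubling sequence. -/
noncomputable def pdComplexity (m : ℕ) : ℕ := Set.ncard {v | Allowed m v}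

/-- `HasFreq m v c`: the frequency of the `m`-word `v` in the period-doubling
sequence exists and equals `c`. -/
def HasFreq (m : ℕ) (v : List ℕ) (c : ℝ) : Prop :=
  Tendsto (fun n : ℕ => (((Finset.Icc 1 n).filter (fun i => wordAt i m = v)).card : ℝ) / n)
    atTop (𝓝 c)

open Classical in
/-- The correlation sum `C(ω, n, m)` of the period-doubling sequence, for a distance
threshold `ε` with `2^{-m} ≤ ε < 2^{-m+1}`. -/
noncomputable def corrSum (n m : ℕ) : ℝ :=
  (((Finset.range n ×ˢ Finset.range n).filter
      (fun p : ℕ × ℕ => ∀ h ∈ Finset.Icc 1 m, pd (p.1 + h) = pd (p.2 + h))).card : ℝ) / (n : ℝ) ^ 2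

/-- The period-doubling substitution `ζ(0) = 01`, `ζ(1) = 00`, extended to a morphism
on finite words. -/
def substWord (w : List ℕ) : List ℕ := (w.map (fun a => if a = 0 then [0, 1] else [0, 0])).flatten

/-- The period-doubling substitution acting on one-sided infinite sequences
(0-based indexing). -/
def substSeq (x : ℕ → ℕ) : ℕ → ℕ := fun n =>
  if n % 2 = 0 then 0 else if x (n / 2) = 0 then 1 else 0

lemma pd_odd (j : ℕ) : pd (2 * j + 1) = 0 := by
  have h : padicValNat 2 (2 * j + 1) = 0 := padicValNat.eq_zero_of_not_dvd (by omega)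
  simp [pd, h]

lemma pd_two_mul (j : ℕ) (hj : 1 ≤ j) : pd (2 * j) = 1 - pd j := by
  have h : padicValNat 2 (2 * j) = 1 + padicValNat 2 j := by
    rw [padicValNat.mul (by norm_num) (by omega), padicValNat.self (by norm_num)]
  unfold pd
  rw [h]
  omega

lemma pd_lt_two (i : ℕ) : pd i < 2 := Nat.mod_lt _ (by norm_num)

lemma wordAt_eq_iff (i j m : ℕ) :
    wordAt i m = wordAt j m ↔ ∀ h < m, pd (i + h) = pd (j + h) := by
  simp [wordAt]

lemma wordAt_getD (i m h : ℕ) (hh : h < m) : (wordAt i m).getD h 0 = pd (i + h) := by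
  simp [wordAt, List.getD, hh]

/-- The `m`-word starting at an even index `2 * j`, as a function of the word at `j`. -/
def evenLift (m : ℕ) (v : List ℕ) : List ℕ :=
  (List.range m).map (fun h => if h % 2 = 0 then 1 - v.getD (h / 2) 0 else 0)

/-- The `m`-word starting at an odd index `2 * j - 1`, as a function of the word at `j`. -/
def oddLift (m : ℕ) (v : List ℕ) : List ℕ :=
  (List.range m).map (fun h => if h % 2 = 1 then 1 - v.getD (h / 2) 0 else 0)

lemma evenLift_wordAt (m j : ℕ) (hj : 1 ≤ j) :
    evenLift m (wordAt j ((m + 1) / 2)) = wordAt (2 * j) m := by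
  unfold evenLift
  conv_rhs => unfold wordAt
  refine List.map_congr_left fun h hh => ?_
  have hh : h < m := by simpa using hh
  obtain ⟨a, rfl | rfl⟩ : ∃ a, h = 2 * a ∨ h = 2 * a + 1 := ⟨h / 2, by omega⟩
  · rw [if_pos (by omega), wordAt_getD _ _ _ (by omega), ← mul_add, pd_two_mul _ (by omega)]
    congr 3
    omega
  · rw [if_neg (by omega), ← add_assoc, ← mul_add, pd_odd]

lemma oddLift_wordAt (m j : ℕ) :
    oddLift m (wordAt (j + 1) (m / 2)) = wordAt (2 * j + 1) m := by
  unfold oddLift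
  conv_rhs => unfold wordAt
  refine List.map_congr_left fun h hh => ?_
  have hh : h < m := by simpa using hh
  obtain ⟨a, rfl | rfl⟩ : ∃ a, h = 2 * a ∨ h = 2 * a + 1 := ⟨h / 2, by omega⟩
  · rw [if_neg (by omega), show 2 * j + 1 + 2 * a = 2 * (j + a) + 1 by ring, pd_odd]
  · rw [if_pos (by omega), wordAt_getD _ _ _ (by omega),
      show 2 * j + 1 + (2 * a + 1) = 2 * (j + 1 + a) by ring, pd_two_mul _ (by omega)]
    congr 3
    omega

lemma evenLift_injOn (m : ℕ) : Set.InjOn (evenLift m) {v | Allowed ((m + 1) / 2) v} := by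
  rintro _ ⟨i, hi, rfl⟩ _ ⟨j, hj, rfl⟩ h
  rw [evenLift_wordAt m i hi, evenLift_wordAt m j hj, wordAt_eq_iff] at h
  rw [wordAt_eq_iff]
  intro a ha
  have h1 := h (2 * a) (by omega)
  rw [← mul_add, ← mul_add, pd_two_mul _ (by omega), pd_two_mul _ (by omega)] at h1
  have := pd_lt_two (i + a)
  have := pd_lt_two (j + a)
  omega

lemma oddLift_injOn (m : ℕ) : Set.InjOn (oddLift m) {v | Allowed (m / 2) v} := by
  rintro _ ⟨i, hi, rfl⟩ _ ⟨j, hj, rfl⟩ h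
  obtain ⟨i, rfl⟩ := Nat.exists_eq_add_of_le' hi
  obtain ⟨j, rfl⟩ := Nat.exists_eq_add_of_le' hj
  rw [oddLift_wordAt, oddLift_wordAt, wordAt_eq_iff] at h
  rw [wordAt_eq_iff]
  intro a ha
  have h1 := h (2 * a + 1) (by omega)
  rw [show 2 * i + 1 + (2 * a + 1) = 2 * (i + 1 + a) by ring,
    show 2 * j + 1 + (2 * a + 1) = 2 * (j + 1 + a) by ring,
    pd_two_mul _ (by omega), pd_two_mul _ (by omega)] at h1
  have := pd_lt_two (i + 1 + a)
  have := pd_lt_two (j + 1 + a)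
  omega

lemma allowed_finite (m : ℕ) : {v | Allowed m v}.Finite := by
  induction m with
  | zero =>
    refine (Set.finite_singleton []).subset ?_
    rintro _ ⟨i, -, rfl⟩
    simp [wordAt]
  | succ m ih =>
    refine (Set.Finite.image2 (fun v a => v ++ [a]) ih (Set.finite_Iio 2)).subset ?_
    rintro _ ⟨i, hi, rfl⟩
    exact ⟨wordAt i m, ⟨i, hi, rfl⟩, pd (i + m), pd_lt_two _, by simp [wordAt, List.range_succ]⟩

lemma allowed_eq_union (m : ℕ) : {v | Allowed m v} =
    Set.image (evenLift m) {v | Allowed ((m + 1) / 2) v} ∪ Set.image (oddLift m) {v | Allowed (m / 2) v} := by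
  ext v
  constructor
  · rintro ⟨i, hi, rfl⟩
    obtain ⟨a, rfl | rfl⟩ : ∃ a, i = 2 * a ∨ i = 2 * a + 1 := ⟨i / 2, by omega⟩
    · exact Or.inl ⟨_, ⟨a, by omega, rfl⟩, evenLift_wordAt m a (by omega)⟩
    · exact Or.inr ⟨_, ⟨a + 1, by omega, rfl⟩, oddLift_wordAt m a⟩
  · rintro (⟨_, ⟨i, hi, rfl⟩, rfl⟩ | ⟨_, ⟨i, hi, rfl⟩, rfl⟩)
    · exact ⟨2 * i, by omega, (evenLift_wordAt m i hi).symm⟩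
    · obtain ⟨i, rfl⟩ := Nat.exists_eq_add_of_le' hi
      exact ⟨2 * i + 1, by omega, (oddLift_wordAt m i).symm⟩

lemma lifts_disjoint (m : ℕ) (hm : 3 ≤ m) :
    Disjoint (Set.image (evenLift m) {v | Allowed ((m + 1) / 2) v})
      (Set.image (oddLift m) {v | Allowed (m / 2) v}) := by
  rw [Set.disjoint_left]
  rintro _ ⟨_, ⟨i, hi, rfl⟩, rfl⟩ ⟨_, ⟨j, hj, rfl⟩, h⟩
  obtain ⟨j, rfl⟩ := Nat.exists_eq_add_of_le' hj
  rw [evenLift_wordAt m i hi, oddLift_wordAt, wordAt_eq_iff] at h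
  -- Offsets 0 and 2 are odd positions on one side, so they force `pd i = pd (i + 1) = 1`;
  -- but one of `i`, `i + 1` is odd.
  have h0 := h 0 (by omega)
  have h2 := h 2 (by omega)
  rw [add_zero, add_zero, pd_odd, pd_two_mul _ hi] at h0
  rw [show 2 * j + 1 + 2 = 2 * (j + 1) + 1 by ring, pd_odd,
    show 2 * i + 2 = 2 * (i + 1) by ring, pd_two_mul _ (by omega)] at h2
  obtain ⟨a, rfl | rfl⟩ : ∃ a, i = 2 * a ∨ i = 2 * a + 1 := ⟨i / 2, by omega⟩
  · rw [pd_odd] at h2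
    omega
  · rw [pd_odd] at h0
    omega

lemma pdComplexity_rec (m : ℕ) (hm : 3 ≤ m) :
    pdComplexity m = pdComplexity ((m + 1) / 2) + pdComplexity (m / 2) := by
  unfold pdComplexity
  rw [allowed_eq_union m, Set.ncard_union_eq (lifts_disjoint m hm)
    ((allowed_finite _).image _) ((allowed_finite _).image _),
    Set.InjOn.ncard_image (evenLift_injOn m), Set.InjOn.ncard_image (oddLift_injOn m)]

lemma pd_one : pd 1 = 0 := pd_odd 0

lemma pd_two : pd 2 = 1 := by rw [pd_two_mul 1 le_rfl, pd_one]

lemma pd_three : pd 3 = 0 := pd_odd 1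

lemma pd_four : pd 4 = 0 := by rw [pd_two_mul 2 (by norm_num), pd_two]

lemma pdComplexity_one : pdComplexity 1 = 2 := by
  have : {v | Allowed 1 v} = {[0], [1]} := by
    ext v
    constructor
    · rintro ⟨i, hi, rfl⟩
      have h := pd_lt_two i
      interval_cases hp : pd i <;> simp [wordAt, hp]
    · rintro (rfl | rfl)
      · exact ⟨1, le_rfl, by simp [wordAt, pd_one]⟩
      · exact ⟨2, by norm_num, by simp [wordAt, pd_two]⟩
  rw [pdComplexity, this, Set.ncard_pair (by simp)]

lemma pdComplexity_two : pdComplexity 2 = 3 := by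
  have : {v | Allowed 2 v} = {[0, 0], [0, 1], [1, 0]} := by
    ext v
    constructor
    · rintro ⟨i, hi, rfl⟩
      obtain ⟨a, rfl | rfl⟩ : ∃ a, i = 2 * a ∨ i = 2 * a + 1 := ⟨i / 2, by omega⟩
      · have h := pd_lt_two (2 * a)
        interval_cases hp : pd (2 * a) <;> simp [wordAt, hp, pd_odd, List.range_succ]
      · have h := pd_lt_two (2 * a + 1 + 1)
        interval_cases hp : pd (2 * a + 1 + 1) <;> simp [wordAt, hp, pd_odd, List.range_succ]
    · rintro (rfl | rfl | rfl)
      · exact ⟨3, by norm_num, by simp [wordAt, List.range_succ, pd_three, pd_four]⟩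
      · exact ⟨1, le_rfl, by simp [wordAt, List.range_succ, pd_one, pd_two]⟩
      · exact ⟨2, by norm_num, by simp [wordAt, List.range_succ, pd_two, pd_three]⟩
  rw [pdComplexity, this, Set.ncard_eq_three.mpr ⟨_, _, _, by simp, by simp, by simp, rfl⟩]

/-- The complexity formula with `k = j + 1` and the range of `q` extended to include `2 ^ k`. -/
lemma pdComplexity_aux (j : ℕ) : ∀ q ≤ 2 * 2 ^ j, pdComplexity (2 * 2 ^ j + q) =
    if q ≤ 2 ^ j then 3 * 2 ^ j + 2 * q else 4 * 2 ^ j + q := by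
  induction j with
  | zero =>
    have h3 : pdComplexity 3 = 5 := by
      rw [pdComplexity_rec 3 le_rfl]
      simp [pdComplexity_one, pdComplexity_two]
    have h4 : pdComplexity 4 = 6 := by
      rw [pdComplexity_rec 4 (by norm_num)]
      simp [pdComplexity_two]
    intro q hq
    have hq : q ≤ 2 := by simpa using hq
    interval_cases q <;> simp [pdComplexity_two, h3, h4]
  | succ j ih =>
    intro q hq
    have hpos : 1 ≤ 2 ^ j := Nat.one_le_two_pow
    rw [pow_succ] at hq ⊢
    rw [pdComplexity_rec _ (by omega),
      show (2 * (2 ^ j * 2) + q + 1) / 2 = 2 * 2 ^ j + (q + 1) / 2 by omega,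
      show (2 * (2 ^ j * 2) + q) / 2 = 2 * 2 ^ j + q / 2 by omega,
      ih _ (by omega), ih _ (by omega)]
    split_ifs <;> omega

theorem pd_complexity_formula (m k q : ℕ) (hm : m = 2 ^ k + q) (hq : q < 2 ^ k) :
    (k = 0 → pdComplexity m = 2) ∧
    (1 ≤ k → q ≤ 2 ^ (k - 1) → pdComplexity m = 3 * 2 ^ (k - 1) + 2 * q) ∧
    (1 ≤ k → 2 ^ (k - 1) < q → pdComplexity m = 4 * 2 ^ (k - 1) + q) := by
  subst hm
  rcases k with _ | j
  · have hq : q = 0 := by simpa using hq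
    subst hq
    simp [pdComplexity_one]
  · rw [pow_succ'] at hq ⊢
    have h := pdComplexity_aux j q hq.le
    refine ⟨by simp, fun _ h1 => ?_, fun _ h1 => ?_⟩
    · simp only [Nat.add_sub_cancel] at h1 ⊢
      rw [h, if_pos h1]
    · simp only [Nat.add_sub_cancel] at h1 ⊢
      rw [h, if_neg (by omega)]
end

section
/- For any m = 2^k (k ≥ 0), the m-words 0^(m) = ζ^k(0) and 1^(m) = ζ^k(1) differ exactly at the m-th letter: (0^(m))_i = (1^(m))_i for all i < m and (0^(m))_m ≠ (1^(m))_m. Moreover, if k is even then (0^(m))_m = 0 and (1^(m))_m = 1, and if k is odd then (0^(m))_m = 1 and (1^(m))_m = 0. -/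
/-!
The two words share a common prefix: `ζ^k(0) = w a` and `ζ^k(1) = w b` with single letters
`a = k mod 2`, `b = 1 - a`. This is proved by induction on `k`: since `ζ(0) = 01` and `ζ(1) = 00`
agree in their first letter and differ in the second, applying `ζ` to `w a` and `w b` gives
`ζ(w) 0` followed by the exchanged letters `b` and `a`. As `ζ` doubles lengths, `|w| + 1 = 2^k`,
so the last letter is the `2^k`-th one.
-/

open Filter Topology

theorem substWord_append (u v : List ℕ) : substWord (u ++ v) = substWord u ++ substWord v := by
  simp [substWord]

theorem length_substWord (w : List ℕ) : (substWord w).length = 2 * w.length := by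
  induction w with
  | nil => rfl
  | cons a w ih =>
    have h : (substWord [a]).length = 2 := by
      by_cases ha : a = 0 <;> simp [substWord, ha]
    rw [← List.singleton_append, substWord_append, List.length_append, List.length_append, h, ih]
    simp only [List.length_singleton]
    ring

/-- The words `ζ^k(0)` and `ζ^k(1)` consist of a common prefix of length `2^k - 1` followed by
the letters `k mod 2` and `1 - k mod 2` respectively. -/
theorem exists_common_prefix (k : ℕ) :
    ∃ w : List ℕ, w.length + 1 = 2 ^ k ∧
      substWord^[k] [0] = w ++ [k % 2] ∧ substWord^[k] [1] = w ++ [1 - k % 2] := by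
  induction k with
  | zero => exact ⟨[], by simp⟩
  | succ k ih =>
    obtain ⟨w, hw, h0, h1⟩ := ih
    refine ⟨substWord w ++ [0], ?_, ?_, ?_⟩
    · rw [List.length_append, length_substWord, pow_succ, ← hw]
      simp only [List.length_singleton]
      ring
    all_goals
      rw [Function.iterate_succ_apply', ‹substWord^[k] [_] = _›, substWord_append]
      rcases Nat.mod_two_eq_zero_or_one k with h | h <;>
        simp [h, Nat.add_mod, substWord]

theorem pd_zeta_words_differ_at_last (k m : ℕ) (hm : m = 2 ^ k) :
    (substWord^[k] [0]).length = m ∧ (substWord^[k] [1]).length = m ∧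
    (∀ i, 1 ≤ i → i < m →
      (substWord^[k] [0]).getD (i - 1) 0 = (substWord^[k] [1]).getD (i - 1) 0) ∧
    (substWord^[k] [0]).getD (m - 1) 0 ≠ (substWord^[k] [1]).getD (m - 1) 0 ∧
    (k % 2 = 0 →
      (substWord^[k] [0]).getD (m - 1) 0 = 0 ∧ (substWord^[k] [1]).getD (m - 1) 0 = 1) ∧
    (k % 2 = 1 →
      (substWord^[k] [0]).getD (m - 1) 0 = 1 ∧ (substWord^[k] [1]).getD (m - 1) 0 = 0) := by
  obtain ⟨w, hw, h0, h1⟩ := exists_common_prefix k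
  have hlast (a : ℕ) : (w ++ [a]).getD (m - 1) 0 = a := by
    have : m - 1 = w.length := by omega
    simp [this]
  rw [h0, h1, hlast, hlast]
  refine ⟨by simp; omega, by simp; omega, fun i hi him => ?_, by omega, by omega, by omega⟩
  have hlt : i - 1 < w.length := by omega
  rw [List.getD_append _ _ _ _ hlt, List.getD_append _ _ _ _ hlt]
end

section
/- For every m = 2^k with k ≥ 1, the set of all allowed m-words of the period-doubling sequence equals {w_i^(m) : (3/2)m < i ≤ 3m}. -/
/-!
Write `m = 2n` with `n = 2 ^ j`. An `m`-window starting at `i` contains exactly two multiples of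
`n`, namely `n * a` and `n * (a + 1)` with `a = ⌈i / n⌉`. Away from multiples of `n` the sequence
depends only on the residue modulo `n` (`pd_eq_of_modEq`), and `pd (n * a)` depends only on `pd a`
(`pd_pow_mul_congr`). Hence the word at `i` is determined by the offset `r = n * a - i < n` and the
pair `(pd a, pd (a + 1))` (`wordAt_congr`). As one of `a`, `a + 1` is odd, this pair is `(0, 0)`,
`(0, 1)` or `(1, 0)`; these are realised by `a = 4, 5, 6` respectively, and the corresponding
starting points `n * a - r` fill exactly the range `3 * n < i ≤ 6 * n`.
-/

open Filter Topology

lemma pd_odd_s10 {x : ℕ} (h : x % 2 = 1) : pd x = 0 := by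
  have : padicValNat 2 x = 0 := padicValNat.eq_zero_of_not_dvd (by omega)
  simp [pd, this]

lemma pd_two_mul_s10 {x : ℕ} (h : x ≠ 0) : pd (2 * x) = (pd x + 1) % 2 := by
  unfold pd
  rw [padicValNat.mul (by norm_num) h, padicValNat.self (by norm_num)]
  omega

lemma pd_eq_of_modEq (j : ℕ) : ∀ x y : ℕ, x ≡ y [MOD 2 ^ j] → ¬ 2 ^ j ∣ x → pd x = pd y := by
  induction j with
  | zero => intro x y _ h; simp at h
  | succ j ih =>
    intro x y hxy hx
    have hpar : x % 2 = y % 2 := hxy.of_dvd (dvd_pow_self 2 (Nat.succ_ne_zero j))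
    rcases Nat.mod_two_eq_zero_or_one x with h | h
    · obtain ⟨x', rfl⟩ : 2 ∣ x := Nat.dvd_of_mod_eq_zero h
      obtain ⟨y', rfl⟩ : 2 ∣ y := Nat.dvd_of_mod_eq_zero (hpar ▸ h)
      rw [pow_succ'] at hxy hx
      have hxy' : x' ≡ y' [MOD 2 ^ j] := Nat.ModEq.mul_left_cancel' (by norm_num) hxy
      have hx' : ¬ 2 ^ j ∣ x' := fun hd => hx (Nat.mul_dvd_mul_left 2 hd)
      have hy' : ¬ 2 ^ j ∣ y' := fun hd => hx' ((hxy'.dvd_iff dvd_rfl).2 hd)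
      have hx0 : x' ≠ 0 := by rintro rfl; exact hx' (dvd_zero _)
      have hy0 : y' ≠ 0 := by rintro rfl; exact hy' (dvd_zero _)
      rw [pd_two_mul_s10 hx0, pd_two_mul_s10 hy0, ih x' y' hxy' hx']
    · rw [pd_odd_s10 h, pd_odd_s10 (hpar ▸ h)]

lemma pd_pow_mul_congr (j : ℕ) {a b : ℕ} (ha : a ≠ 0) (hb : b ≠ 0) (h : pd a = pd b) :
    pd (2 ^ j * a) = pd (2 ^ j * b) := by
  unfold pd at *
  rw [padicValNat.mul (by positivity) ha, padicValNat.mul (by positivity) hb]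
  omega

/-- The word of length `2 * 2 ^ j` at `i` is determined by the offset `r` to the first multiple
`2 ^ j * a` of `2 ^ j` in it, together with `pd a` and `pd (a + 1)`. -/
lemma wordAt_congr {j r a b i i' : ℕ} (hr : r < 2 ^ j) (ha : a ≠ 0) (hb : b ≠ 0)
    (hi : i + r = 2 ^ j * a) (hi' : i' + r = 2 ^ j * b)
    (h0 : pd a = pd b) (h1 : pd (a + 1) = pd (b + 1)) :
    wordAt i (2 * 2 ^ j) = wordAt i' (2 * 2 ^ j) := by
  unfold wordAt
  apply List.map_congr_left
  intro h hh
  rw [List.mem_range] at hh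
  by_cases e0 : h = r
  · rw [e0, hi, hi']
    exact pd_pow_mul_congr j ha hb h0
  by_cases e1 : h = r + 2 ^ j
  · have ea : i + h = 2 ^ j * (a + 1) := by rw [mul_add]; omega
    have eb : i' + h = 2 ^ j * (b + 1) := by rw [mul_add]; omega
    rw [ea, eb]
    exact pd_pow_mul_congr j (by omega) (by omega) h1
  apply pd_eq_of_modEq j
  · apply Nat.ModEq.add_right h
    apply Nat.ModEq.add_right_cancel' r
    rw [hi, hi']
    exact ((Nat.modEq_zero_iff_dvd.2 (dvd_mul_right _ _)).trans
      (Nat.modEq_zero_iff_dvd.2 (dvd_mul_right _ _)).symm)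
  · rintro ⟨c, hc⟩
    -- `n * c = n * a + (h - r)` with `-n < h - r < 2 * n`, so `c` is `a` or `a + 1`.
    have l : a < c + 1 := by
      apply Nat.lt_of_mul_lt_mul_left (a := 2 ^ j)
      rw [mul_add]; omega
    have u : c < a + 2 := by
      apply Nat.lt_of_mul_lt_mul_left (a := 2 ^ j)
      rw [mul_add]; omega
    obtain rfl | rfl : c = a ∨ c = a + 1 := by omega
    · omega
    · rw [mul_add] at hc; omega

lemma exists_pd_pair (a : ℕ) :
    ∃ b, 4 ≤ b ∧ b ≤ 6 ∧ pd a = pd b ∧ pd (a + 1) = pd (b + 1) := by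
  have p1 : pd 1 = 0 := pd_odd_s10 rfl
  have p2 : pd 2 = 1 := by rw [show 2 = 2 * 1 from rfl, pd_two_mul_s10 (by norm_num), p1]
  have p4 : pd 4 = 0 := by rw [show 4 = 2 * 2 from rfl, pd_two_mul_s10 (by norm_num), p2]
  have p5 : pd 5 = 0 := pd_odd_s10 rfl
  have p6 : pd 6 = 1 := by
    rw [show 6 = 2 * 3 from rfl, pd_two_mul_s10 (by norm_num), pd_odd_s10 rfl]
  have p7 : pd 7 = 0 := pd_odd_s10 rfl
  have b0 : pd a < 2 := Nat.mod_lt _ (by norm_num)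
  have b1 : pd (a + 1) < 2 := Nat.mod_lt _ (by norm_num)
  have hodd : pd a = 0 ∨ pd (a + 1) = 0 := by
    rcases Nat.mod_two_eq_zero_or_one a with h | h
    · exact Or.inr (pd_odd_s10 (by omega))
    · exact Or.inl (pd_odd_s10 h)
  by_cases ha : pd a = 0
  · by_cases ha1 : pd (a + 1) = 0
    · exact ⟨4, by norm_num, by norm_num, by omega, by norm_num; omega⟩
    · exact ⟨5, by norm_num, by norm_num, by omega, by norm_num; omega⟩
  · exact ⟨6, by norm_num, by norm_num, by omega, by norm_num; omega⟩

theorem pd_language_second_window (k m : ℕ) (hk : 1 ≤ k) (hm : m = 2 ^ k) :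
    {v | Allowed m v} = {v | ∃ i, 3 * m / 2 < i ∧ i ≤ 3 * m ∧ wordAt i m = v} := by
  obtain ⟨j, rfl⟩ : ∃ j, k = j + 1 := ⟨k - 1, by omega⟩
  rw [pow_succ'] at hm
  subst hm
  have hn : 0 < 2 ^ j := by positivity
  ext v
  simp only [Set.mem_ofPred_eq, Allowed]
  constructor
  · rintro ⟨i, hi, rfl⟩
    obtain ⟨a, r, hr, ha, hia⟩ : ∃ a r, r < 2 ^ j ∧ a ≠ 0 ∧ i + r = 2 ^ j * a := by
      -- `a = ⌈i / n⌉ = (i - 1) / n + 1`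
      have hdiv := Nat.div_add_mod (i - 1) (2 ^ j)
      have hlt := Nat.mod_lt (i - 1) hn
      refine ⟨(i - 1) / 2 ^ j + 1, 2 ^ j - 1 - (i - 1) % 2 ^ j, by omega, Nat.succ_ne_zero _, ?_⟩
      rw [mul_add]; omega
    obtain ⟨b, hb4, hb6, h0, h1⟩ := exists_pd_pair a
    have lo : 2 ^ j * 4 ≤ 2 ^ j * b := Nat.mul_le_mul_left _ hb4
    have hi6 : 2 ^ j * b ≤ 2 ^ j * 6 := Nat.mul_le_mul_left _ hb6
    refine ⟨2 ^ j * b - r, by omega, by omega, ?_⟩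
    exact (wordAt_congr hr ha (by omega) hia (by omega) h0 h1).symm
  · rintro ⟨i, hi, -, rfl⟩
    exact ⟨i, by omega, rfl⟩
end
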